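/- arXiv:math/0112086 — 3 statements merged into one kernel-verified Lean document; each statement's English description precedes it below -/
import Mathlib

section
/- Let d and r be positive integers and let S be a set of positive integers with S ⊆ {1,…,d}. Then the minimum of s(k) over all k ∈ K_r satisfying k_ℓ = k_{ℓ+1} for every ℓ ∈ {1,…,d} with ℓ ∉ S (with the convention k_{d+1} := 0) equals s̃(r,S); in particular, this constrained set is nonempty if and only if an r-tiling sequence with tiles in S exists, and when both sides are finite the minimum is attained and equals s̃(r,S). -/
open scoped BigOperators

/-- `s(n)`: the number of 1's in the binary expansion of `n`. -/
def binDigitSum (n : ℕ) : ℕ := (Nat.digits 2 n).sum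

/-- An `r`-tiling sequence with tiles in `S`, recorded as a list of pairs `(b_i, ℓ_i)`:
each `ℓ_i ∈ S`, the `b_i` are weakly increasing, `ℓ_i > ℓ_{i+1}` whenever `b_i = b_{i+1}`,
and `∑ ℓ_i·2^{b_i} = r`. -/
def IsTiling (S : Finset ℕ) (r : ℕ) (L : List (ℕ × ℕ)) : Prop :=
  (∀ p ∈ L, p.2 ∈ S) ∧
  L.Chain' (fun p q => p.1 ≤ q.1 ∧ (p.1 = q.1 → q.2 < p.2)) ∧
  (L.map fun p => p.2 * 2 ^ p.1).sum = r

/-- `s̃(r,S)`: the minimal length of an `r`-tiling sequence (`⊤` if none exists). -/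
noncomputable def stilde (S : Finset ℕ) (r : ℕ) : ℕ∞ :=
  sInf {n : ℕ∞ | ∃ L : List (ℕ × ℕ), IsTiling S r L ∧ (L.length : ℕ∞) = n}

/-- `K̃(r,S)`: the set of `r`-tiling sequences of minimal length. -/
def Ktilde (S : Finset ℕ) (r : ℕ) : Set (List (ℕ × ℕ)) :=
  {L | IsTiling S r L ∧ (L.length : ℕ∞) = stilde S r}

/-- `K_r`: weakly decreasing `d`-tuples of nonnegative integers summing to `r`. -/
def Kset (d r : ℕ) : Set (Fin d → ℕ) := {k | Antitone k ∧ ∑ i, k i = r}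

/-- The entry following `k i`, with the convention `k_{d+1} = 0`. -/
def nextEntry {d : ℕ} (k : Fin d → ℕ) (i : Fin d) : ℕ :=
  if h : (i : ℕ) + 1 < d then k ⟨(i : ℕ) + 1, h⟩ else 0

/-- `s(k) = s(k_1−k_2)+s(k_2−k_3)+⋯+s(k_{d−1}−k_d)+s(k_d)`. -/
def sBox {d : ℕ} (k : Fin d → ℕ) : ℕ := ∑ i, binDigitSum (k i - nextEntry k i)

/-- The `k ∈ K_r` with `k_ℓ = k_{ℓ+1}` for every `ℓ ∉ S`. -/
def IsAdmissible {d : ℕ} (S : Finset ℕ) (r : ℕ) (k : Fin d → ℕ) : Prop :=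
  k ∈ Kset d r ∧ ∀ i : Fin d, ((i : ℕ) + 1) ∉ S → k i = nextEntry k i

/-- Some multiplicities `m_ℓ`, `ℓ ∈ S`, satisfy `∑ ℓ·m_ℓ = r` and `∑ s(m_ℓ) = n`. -/
def HasMultiplicities (S : Finset ℕ) (r n : ℕ) : Prop :=
  ∃ m : ℕ → ℕ, ∑ l ∈ S, l * m l = r ∧ ∑ l ∈ S, binDigitSum (m l) = n

theorem binDigitSum_eq_length_bitIndices (n : ℕ) :
    binDigitSum n = n.bitIndices.length := by
  unfold binDigitSum
  induction n using Nat.strong_induction_on with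
  | _ n ih =>
    rcases Nat.eq_zero_or_pos n with rfl | hn
    · simp
    · rw [Nat.digits_def' (by norm_num) hn, List.sum_cons, ih _ (by omega)]
      rcases Nat.even_or_odd' n with ⟨c, rfl | rfl⟩
      · simp
      · rw [Nat.bitIndices_two_mul_add_one, show (2 * c + 1) / 2 = c by omega,
          show (2 * c + 1) % 2 = 1 by omega]
        simp [add_comm]

theorem binDigitSum_eq_card (n : ℕ) : binDigitSum n = n.bitIndices.toFinset.card := by
  rw [binDigitSum_eq_length_bitIndices, List.toFinset_card_of_nodup Nat.bitIndices_nodup]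

theorem binDigitSum_sum_two_pow (B : Finset ℕ) : binDigitSum (∑ b ∈ B, 2 ^ b) = B.card := by
  rw [binDigitSum_eq_card, Finset.toFinset_bitIndices_sum_two_pow]

theorem IsTiling.nodup {S : Finset ℕ} {r : ℕ} {L : List (ℕ × ℕ)} (h : IsTiling S r L) :
    L.Nodup := by
  have : IsTrans (ℕ × ℕ) (fun p q => p.1 ≤ q.1 ∧ (p.1 = q.1 → q.2 < p.2)) :=
    ⟨fun a b c h₁ h₂ => ⟨h₁.1.trans h₂.1, fun h => by
      have hab : a.1 = b.1 := le_antisymm h₁.1 (h ▸ h₂.1)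
      exact (h₂.2 (hab ▸ h)).trans (h₁.2 hab)⟩⟩
  refine (List.isChain_iff_pairwise.1 h.2.1).imp ?_
  rintro a b h rfl
  exact lt_irrefl _ (h.2 rfl)

theorem IsTiling.hasMultiplicities {S : Finset ℕ} {r : ℕ} {L : List (ℕ × ℕ)}
    (h : IsTiling S r L) : HasMultiplicities S r L.length := by
  have hmaps : ∀ p ∈ L.toFinset, p.2 ∈ S := fun p hp => h.1 p (List.mem_toFinset.1 hp)
  have hinj : ∀ l, Set.InjOn Prod.fst
      (L.toFinset.filter (fun p => p.2 = l) : Set (ℕ × ℕ)) := by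
    intro l p hp q hq hpq
    simp only [Finset.coe_filter, Set.mem_ofPred_eq] at hp hq
    exact Prod.ext hpq (hp.2.trans hq.2.symm)
  refine ⟨fun l => ∑ b ∈ (L.toFinset.filter (fun p => p.2 = l)).image Prod.fst, 2 ^ b, ?_, ?_⟩
  · rw [← h.2.2, ← List.sum_toFinset _ h.nodup, ← Finset.sum_fiberwise_of_maps_to hmaps]
    refine Finset.sum_congr rfl fun l _ => ?_
    beta_reduce
    rw [Finset.sum_image (hinj l), Finset.mul_sum]
    refine Finset.sum_congr rfl fun p hp => ?_
    rw [(Finset.mem_filter.1 hp).2]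
  · rw [← List.toFinset_card_of_nodup h.nodup, Finset.card_eq_sum_card_fiberwise hmaps]
    refine Finset.sum_congr rfl fun l _ => ?_
    rw [binDigitSum_sum_two_pow, Finset.card_image_of_injOn (hinj l)]

theorem HasMultiplicities.exists_isTiling {S : Finset ℕ} {r n : ℕ}
    (h : HasMultiplicities S r n) : ∃ L, IsTiling S r L ∧ L.length = n := by
  obtain ⟨m, hr, hn⟩ := h
  let e : (Σ _ : ℕ, ℕ) ↪ ℕ ×ₗ ℕᵒᵈ := ⟨fun x => toLex (x.2, OrderDual.toDual x.1), by
    rintro ⟨a, b⟩ ⟨a', b'⟩ hab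
    simpa [and_comm] using hab⟩
  let F := (S.sigma fun l => (m l).bitIndices.toFinset).map e
  let g : ℕ ×ₗ ℕᵒᵈ → ℕ × ℕ := fun p => ((ofLex p).1, OrderDual.ofDual (ofLex p).2)
  refine ⟨(F.sort).map g, ⟨?_, ?_, ?_⟩, ?_⟩
  · simp only [List.mem_map, Finset.mem_sort, F, Finset.mem_map, Finset.mem_sigma]
    rintro p ⟨q, ⟨x, hx, rfl⟩, rfl⟩
    exact hx.1
  · refine (List.isChain_map g).2 ((F.sortedLT_sort.pairwise.imp ?_).isChain)
    intro p q hpq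
    rcases Prod.Lex.lt_iff.1 hpq with h | ⟨h₁, h₂⟩
    · exact ⟨h.le, fun h' => absurd h' h.ne⟩
    · exact ⟨h₁.le, fun _ => h₂⟩
  · rw [List.map_map, ← List.sum_toFinset _ (F.sort_nodup _), Finset.sort_toFinset,
      Finset.sum_map, Finset.sum_sigma, ← hr]
    refine Finset.sum_congr rfl fun l _ => ?_
    conv_rhs => rw [← Finset.sum_toFinset_bitIndices_two_pow (m l), Finset.mul_sum]
    rfl
  · rw [List.length_map, Finset.length_sort, Finset.card_map, Finset.card_sigma, ← hn]
    exact Finset.sum_congr rfl fun l _ => (binDigitSum_eq_card _).symm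

/-- Summation by parts. -/
theorem sum_range_eq_sum_mul_sub {K : ℕ → ℕ} (hK : ∀ j, K (j + 1) ≤ K j) (n : ℕ) :
    ∑ j ∈ Finset.range n, K j =
      ∑ j ∈ Finset.range n, (j + 1) * (K j - K (j + 1)) + n * K n := by
  induction n with
  | zero => simp
  | succ n ih =>
    rw [Finset.sum_range_succ, Finset.sum_range_succ, ih]
    obtain ⟨c, hc⟩ := Nat.exists_eq_add_of_le (hK n)
    rw [hc, Nat.add_sub_cancel_left]
    ring

theorem sum_range_succ_eq_sum_of_subset_Icc {d : ℕ} {S : Finset ℕ} (hS : S ⊆ Finset.Icc 1 d)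
    {f : ℕ → ℕ} (hf : ∀ j < d, j + 1 ∉ S → f (j + 1) = 0) :
    ∑ j ∈ Finset.range d, f (j + 1) = ∑ l ∈ S, f l := by
  have himage : ∑ j ∈ Finset.range d, f (j + 1) = ∑ l ∈ Finset.Icc 1 d, f l := by
    rw [Finset.range_eq_Ico, Finset.sum_Ico_add' f 0 d 1]
    rfl
  rw [himage]
  refine (Finset.sum_subset hS fun l hl hlS => ?_).symm
  rw [Finset.mem_Icc] at hl
  have := hf (l - 1) (by omega)
  rw [Nat.sub_add_cancel hl.1] at this
  exact this hlS

theorem binDigitSum_zero : binDigitSum 0 = 0 := by simp [binDigitSum]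

theorem IsAdmissible.hasMultiplicities {d r : ℕ} {S : Finset ℕ} (hS : S ⊆ Finset.Icc 1 d)
    {k : Fin d → ℕ} (h : IsAdmissible S r k) : HasMultiplicities S r (sBox k) := by
  obtain ⟨⟨hanti, hsum⟩, hk⟩ := h
  let K : ℕ → ℕ := fun j => if h : j < d then k ⟨j, h⟩ else 0
  have hKi : ∀ i : Fin d, k i = K i := fun i => by simp [K]
  have hKnext : ∀ i : Fin d, nextEntry k i = K (i + 1) := fun i => rfl
  have hK : ∀ j, K (j + 1) ≤ K j := by
    intro j
    by_cases hj : j + 1 < d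
    · simp only [K, hj, Nat.lt_of_succ_lt hj, dite_true]
      exact hanti (Fin.mk_le_mk.2 j.le_succ)
    · simp [K, hj]
  have hKd : K d = 0 := by simp [K]
  have hzero : ∀ j < d, j + 1 ∉ S → K j - K (j + 1) = 0 := by
    intro j hj hjS
    have := hk ⟨j, hj⟩ hjS
    rw [hKi, hKnext] at this
    exact Nat.sub_eq_zero_of_le this.le
  refine ⟨fun l => K (l - 1) - K l, ?_, ?_⟩
  · rw [← sum_range_succ_eq_sum_of_subset_Icc hS (f := fun l => l * (K (l - 1) - K l))
      fun j hj hjS => by simp [hzero j hj hjS]]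
    have := sum_range_eq_sum_mul_sub hK d
    rw [hKd, mul_zero, add_zero] at this
    simp only [Nat.add_sub_cancel]
    rw [← this, Finset.sum_range, ← hsum]
    exact Finset.sum_congr rfl fun i _ => (hKi i).symm
  · rw [← sum_range_succ_eq_sum_of_subset_Icc hS
      (f := fun l => binDigitSum (K (l - 1) - K l))
      fun j hj hjS => by simp [hzero j hj hjS, binDigitSum_zero]]
    rw [Finset.sum_range, sBox]
    exact Finset.sum_congr rfl fun i _ => by rw [hKi, hKnext, Nat.add_sub_cancel]

theorem HasMultiplicities.exists_isAdmissible {d r n : ℕ} {S : Finset ℕ}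
    (hS : S ⊆ Finset.Icc 1 d) (h : HasMultiplicities S r n) :
    ∃ k : Fin d → ℕ, IsAdmissible S r k ∧ sBox k = n := by
  obtain ⟨m, hr, hn⟩ := h
  let c : ℕ → ℕ := fun l => if l ∈ S then m l else 0
  let K : ℕ → ℕ := fun j => ∑ i ∈ Finset.Ico j d, c (i + 1)
  have hKge : ∀ j, d ≤ j → K j = 0 := fun j hj => by simp [K, Finset.Ico_eq_empty_of_le hj]
  have hKlt : ∀ j < d, K j = c (j + 1) + K (j + 1) :=
    fun j hj => Finset.sum_eq_sum_Ico_succ_bot hj _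
  have hKsub : ∀ j < d, K j - K (j + 1) = c (j + 1) := fun j hj => by
    rw [hKlt j hj, Nat.add_sub_cancel]
  have hK : ∀ j, K (j + 1) ≤ K j := by
    intro j
    rcases lt_or_ge j d with hj | hj
    · exact (hKlt j hj).symm ▸ Nat.le_add_left _ _
    · rw [hKge (j + 1) (by omega)]
      exact Nat.zero_le _
  have hnext : ∀ i : Fin d, nextEntry (fun i : Fin d => K i) i = K (i + 1) := by
    intro i
    unfold nextEntry
    split_ifs with h
    · rfl
    · exact (hKge _ (not_lt.1 h)).symm
  refine ⟨fun i => K i, ⟨⟨fun i j hij => antitone_nat_of_succ_le hK hij, ?_⟩, ?_⟩, ?_⟩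
  · rw [← Finset.sum_range, sum_range_eq_sum_mul_sub hK, hKge d le_rfl, mul_zero, add_zero,
      Finset.sum_congr rfl fun j hj => by rw [hKsub j (Finset.mem_range.1 hj)],
      sum_range_succ_eq_sum_of_subset_Icc hS (f := fun l => l * c l)
        fun j _ hjS => by simp [c, hjS], ← hr]
    exact Finset.sum_congr rfl fun l hl => by simp [c, hl]
  · intro i hi
    rw [hnext]
    beta_reduce
    rw [hKlt i i.2]
    simp [c, hi]
  · unfold sBox
    simp only [hnext]
    rw [Finset.sum_congr rfl fun (i : Fin d) _ => by rw [hKsub i i.2],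
      ← Finset.sum_range (fun j => binDigitSum (c (j + 1))),
      sum_range_succ_eq_sum_of_subset_Icc hS (f := fun l => binDigitSum (c l))
        fun j _ hjS => by simp [c, hjS, binDigitSum_zero], ← hn]
    exact Finset.sum_congr rfl fun l hl => by simp [c, hl]

theorem stmt1 (d r : ℕ) (hd : 0 < d) (hr : 0 < r) (S : Finset ℕ)
    (hS : S ⊆ Finset.Icc 1 d) :
    sInf {n : ℕ∞ | ∃ k : Fin d → ℕ, k ∈ Kset d r ∧
        (∀ i : Fin d, ((i : ℕ) + 1) ∉ S → k i = nextEntry k i) ∧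
        ((sBox k : ℕ) : ℕ∞) = n} = stilde S r ∧
    ((∃ k : Fin d → ℕ, k ∈ Kset d r ∧
        ∀ i : Fin d, ((i : ℕ) + 1) ∉ S → k i = nextEntry k i) ↔
      ∃ L : List (ℕ × ℕ), IsTiling S r L) ∧
    ((∃ L : List (ℕ × ℕ), IsTiling S r L) →
      ∃ k : Fin d → ℕ, k ∈ Kset d r ∧
        (∀ i : Fin d, ((i : ℕ) + 1) ∉ S → k i = nextEntry k i) ∧
        ((sBox k : ℕ) : ℕ∞) = stilde S r) := by
  have toTiling : ∀ k : Fin d → ℕ, IsAdmissible S r k →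
      ∃ L, IsTiling S r L ∧ L.length = sBox k :=
    fun k hk => (hk.hasMultiplicities hS).exists_isTiling
  have ofTiling : ∀ L, IsTiling S r L →
      ∃ k : Fin d → ℕ, IsAdmissible S r k ∧ sBox k = L.length :=
    fun L hL => hL.hasMultiplicities.exists_isAdmissible hS
  refine ⟨?_, ⟨?_, ?_⟩, ?_⟩
  · unfold stilde
    congr 1
    ext n
    constructor
    · rintro ⟨k, hk, hk', rfl⟩
      obtain ⟨L, hL, hlen⟩ := toTiling k ⟨hk, hk'⟩
      exact ⟨L, hL, by rw [hlen]⟩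
    · rintro ⟨L, hL, rfl⟩
      obtain ⟨k, hk, hlen⟩ := ofTiling L hL
      exact ⟨k, hk.1, hk.2, by rw [hlen]⟩
  · rintro ⟨k, hk⟩
    obtain ⟨L, hL, -⟩ := toTiling k hk
    exact ⟨L, hL⟩
  · rintro ⟨L, hL⟩
    obtain ⟨k, hk, -⟩ := ofTiling L hL
    exact ⟨k, hk⟩
  · rintro ⟨L₀, hL₀⟩
    obtain ⟨L, hL, hlen⟩ : stilde S r ∈
        {n : ℕ∞ | ∃ L : List (ℕ × ℕ), IsTiling S r L ∧ (L.length : ℕ∞) = n} :=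
      csInf_mem ⟨_, L₀, hL₀, rfl⟩
    obtain ⟨k, hk, hk'⟩ := ofTiling L hL
    exact ⟨k, hk.1, hk.2, by rw [hk', hlen]⟩
end

section
/- Let S = {3,5,7,9,11,13,17}. For every integer k with 0 ≤ k ≤ 5, one has s̃(2^{21−3k}−8, S) = 6−k, and every (2^{21−3k}−8)-tiling sequence (b_1,ℓ_1),…,(b_{6−k},ℓ_{6−k}) with tiles in S of minimal length 6−k satisfies either (b_{6−k},ℓ_{6−k}) = (18−3k, 7), or both (b_{6−k},ℓ_{6−k}) = (17−3k, 13) and (b_{5−k},ℓ_{5−k}) = (15−3k, 11). -/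
open scoped BigOperators

theorem binDigitSum_eq_mod_add_div (n : ℕ) : binDigitSum n = n % 2 + binDigitSum (n / 2) := by
  rcases Nat.eq_zero_or_pos n with rfl | hn
  · simp [binDigitSum]
  · simp [binDigitSum, Nat.digits_def' (by norm_num : 1 < 2) hn]

theorem binDigitSum_add_add_le (a b c : ℕ) (hc : c ≤ 1) :
    binDigitSum (a + b + c) ≤ binDigitSum a + binDigitSum b + c := by
  induction a using Nat.strong_induction_on generalizing b c with
  | _ a ih =>
    rcases Nat.eq_zero_or_pos a with rfl | ha
    · induction b using Nat.strong_induction_on generalizing c with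
      | _ b ihb =>
        rcases Nat.eq_zero_or_pos b with rfl | hb
        · interval_cases c <;> simp [binDigitSum]
        · have h := ihb (b / 2) (by omega) ((b % 2 + c) / 2) (by omega)
          rw [binDigitSum_eq_mod_add_div (0 + b + c), binDigitSum_eq_mod_add_div b,
            show (0 + b + c) / 2 = 0 + b / 2 + (b % 2 + c) / 2 by omega]
          omega
    · have h := ih (a / 2) (by omega) (b / 2) ((a % 2 + b % 2 + c) / 2) (by omega)
      rw [binDigitSum_eq_mod_add_div (a + b + c), binDigitSum_eq_mod_add_div a,
        binDigitSum_eq_mod_add_div b,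
        show (a + b + c) / 2 = a / 2 + b / 2 + (a % 2 + b % 2 + c) / 2 by omega]
      omega

theorem binDigitSum_add_le (a b : ℕ) : binDigitSum (a + b) ≤ binDigitSum a + binDigitSum b :=
  binDigitSum_add_add_le a b 0 zero_le_one

theorem binDigitSum_mul_two_pow (n b : ℕ) : binDigitSum (n * 2 ^ b) = binDigitSum n := by
  induction b with
  | zero => simp
  | succ b ih =>
    rw [binDigitSum_eq_mod_add_div, pow_succ, ← mul_assoc, Nat.mul_mod_left, zero_add,
      Nat.mul_div_cancel _ two_pos, ih]

/-- Binary digit sums bound the length of a tiling from below. -/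
theorem binDigitSum_sum_le {d : ℕ} {L : List (ℕ × ℕ)} (hd : ∀ p ∈ L, binDigitSum p.2 ≤ d) :
    binDigitSum (L.map fun p => p.2 * 2 ^ p.1).sum ≤ d * L.length := by
  induction L with
  | nil => simp [binDigitSum]
  | cons p L ih =>
    rw [List.forall_mem_cons] at hd
    rw [List.map_cons, List.sum_cons, List.length_cons, mul_add_one]
    have := binDigitSum_add_le (p.2 * 2 ^ p.1) (L.map fun p => p.2 * 2 ^ p.1).sum
    rw [binDigitSum_mul_two_pow] at this
    have := ih hd.2
    have := hd.1
    omega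

/-- Candidates for the tilings of `r < 2 ^ N` by `m` tiles in `S` of binary digit sum at most `d`,
found by choosing the leftmost tile first and pruning by binary digit sums. -/
def tilingCandidates (S : List ℕ) (d N : ℕ) : ℕ → ℕ → List (List (ℕ × ℕ))
  | 0, _ => [[]]
  | m + 1, r =>
    (List.range N).flatMap fun b => S.flatMap fun l =>
      if 2 ^ b ∣ r ∧ l * 2 ^ b ≤ r ∧ binDigitSum (r - l * 2 ^ b) ≤ d * m then
        (tilingCandidates S d N m (r - l * 2 ^ b)).map ((b, l) :: ·)
      else []

theorem mem_tilingCandidates {S : List ℕ} {d N : ℕ} (hd : ∀ l ∈ S, binDigitSum l ≤ d)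
    (hpos : ∀ l ∈ S, 0 < l) {L : List (ℕ × ℕ)} (hS : ∀ p ∈ L, p.2 ∈ S)
    (hL : L.Pairwise fun p q => p.1 ≤ q.1) (hN : (L.map fun p => p.2 * 2 ^ p.1).sum < 2 ^ N) :
    L ∈ tilingCandidates S d N L.length (L.map fun p => p.2 * 2 ^ p.1).sum := by
  induction L with
  | nil => simp [tilingCandidates]
  | cons p L ih =>
    obtain ⟨b, l⟩ := p
    rw [List.forall_mem_cons] at hS
    rw [List.pairwise_cons] at hL
    rw [List.map_cons, List.sum_cons] at hN
    have hl : 2 ^ b ≤ l * 2 ^ b := Nat.le_mul_of_pos_left _ (hpos l hS.1)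
    have hb : b < N := (Nat.pow_lt_pow_iff_right one_lt_two).1 (by simp only at hN; omega)
    have hdvd : 2 ^ b ∣ (L.map fun p => p.2 * 2 ^ p.1).sum := by
      refine List.dvd_sum fun x hx => ?_
      obtain ⟨q, hq, rfl⟩ := List.mem_map.1 hx
      exact (pow_dvd_pow 2 (hL.1 q hq)).mul_left _
    simp only [List.length_cons, List.map_cons, List.sum_cons, tilingCandidates,
      List.mem_flatMap, List.mem_range]
    refine ⟨b, hb, l, hS.1, ?_⟩
    rw [Nat.add_sub_cancel_left, if_pos ⟨(dvd_mul_left _ _).add hdvd, Nat.le_add_right _ _,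
      binDigitSum_sum_le fun q hq => hd _ (hS.2 q hq)⟩]
    exact List.mem_map_of_mem (ih hS.2 hL.2 (by omega))

theorem IsTiling.pairwise_fst_le {S : Finset ℕ} {r : ℕ} {L : List (ℕ × ℕ)}
    (h : IsTiling S r L) : L.Pairwise fun p q => p.1 ≤ q.1 := by
  have : IsTrans (ℕ × ℕ) fun p q => p.1 ≤ q.1 := ⟨fun _ _ _ => le_trans⟩
  exact List.isChain_iff_pairwise.1 (List.IsChain.imp (fun _ _ h => h.1) h.2.1)

theorem stilde_eq_of_isTiling {S : Finset ℕ} {r n : ℕ} {L : List (ℕ × ℕ)}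
    (hL : IsTiling S r L) (hn : L.length = n) (hmin : ∀ L, IsTiling S r L → n ≤ L.length) :
    stilde S r = n := by
  refine le_antisymm (sInf_le ⟨L, hL, by rw [hn]⟩) (le_sInf ?_)
  rintro _ ⟨L', hL', rfl⟩
  exact_mod_cast hmin L' hL'

theorem stmt9 (k : ℕ) (hk : k ≤ 5) :
    stilde {3, 5, 7, 9, 11, 13, 17} (2 ^ (21 - 3 * k) - 8) = ((6 - k : ℕ) : ℕ∞) ∧
    ∀ L : List (ℕ × ℕ),
      IsTiling {3, 5, 7, 9, 11, 13, 17} (2 ^ (21 - 3 * k) - 8) L →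
      L.length = 6 - k →
        L[5 - k]? = some (18 - 3 * k, 7) ∨
        (L[5 - k]? = some (17 - 3 * k, 13) ∧ L[4 - k]? = some (15 - 3 * k, 11)) := by
  have hd : ∀ l ∈ ({3, 5, 7, 9, 11, 13, 17} : Finset ℕ), binDigitSum l ≤ 3 := by decide +kernel
  refine ⟨?_, fun L hL hlen => ?_⟩
  · refine stilde_eq_of_isTiling
      (L := (List.range (6 - k)).map fun i => (3 * i + 3, 7)) ?_ (by simp) fun L hL => ?_
    · change _ ∧ List.IsChain _ _ ∧ _
      interval_cases k <;> decide +kernel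
    · have h := binDigitSum_sum_le fun p hp => hd _ (hL.1 p hp)
      have hs : binDigitSum (2 ^ (21 - 3 * k) - 8) = 3 * (6 - k) := by
        interval_cases k <;> decide +kernel
      rw [hL.2.2, hs] at h
      omega
  · have hN : 2 ^ (21 - 3 * k) - 8 < 2 ^ 21 :=
      (Nat.sub_lt (by positivity) (by norm_num)).trans_le
        (pow_le_pow_right₀ one_le_two (Nat.sub_le _ _))
    have hmem := mem_tilingCandidates (S := [3, 5, 7, 9, 11, 13, 17]) (d := 3) (N := 21)
      (by decide +kernel) (by decide) (fun p hp => by simpa using hL.1 p hp)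
      hL.pairwise_fst_le (by rw [hL.2.2]; exact hN)
    rw [hL.2.2, hlen] at hmem
    clear hL hlen hN
    revert L
    interval_cases k <;> decide +kernel
end

section
/- Let S = {1,3,5,9,19} and r = 2^{27}−8. Then s̃(r,S) = 9 and the unique r-tiling sequence with tiles in S of length 9 is (3,19),(5,19),(8,5),(11,19),(13,19),(16,5),(19,19),(21,19),(24,5); that is, 2^{27}−8 = 5·2^{24}+19·2^{21}+19·2^{19}+5·2^{16}+19·2^{13}+19·2^{11}+5·2^{8}+19·2^{5}+19·2^{3} and K̃(r,S) consists of exactly this one sequence. -/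
open scoped BigOperators

/-- The order in which the tiles of a tiling sequence are listed. -/
def TileOrder (p q : ℕ × ℕ) : Prop := p.1 ≤ q.1 ∧ (p.1 = q.1 → q.2 < p.2)

/-- A properly ordered list of tiles with lengths in `S`, those at position `0` being in `A`. -/
structure OrderedTiles (S A : List ℕ) (L : List (ℕ × ℕ)) : Prop where
  mem : ∀ p ∈ L, p.2 ∈ S
  pairwise : L.Pairwise TileOrder
  mem_of_zero : ∀ p ∈ L, p.1 = 0 → p.2 ∈ A

/-- The total size of a list of tiles. -/
def tileSum (L : List (ℕ × ℕ)) : ℕ := (L.map fun p => p.2 * 2 ^ p.1).sum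

/-- Partial information on the shortest lists in some family: a lower bound for the length and,
possibly, the only list that can attain it. -/
abbrev LengthInfo := ℕ × Option (List (ℕ × ℕ))

/-- The list `L` is compatible with the information `i`. -/
def LengthInfo.Holds (i : LengthInfo) (L : List (ℕ × ℕ)) : Prop :=
  i.1 ≤ L.length ∧ ∀ T ∈ i.2, L.length = i.1 → L = T

/-- Information on the union of two families. -/
def LengthInfo.merge (i j : LengthInfo) : LengthInfo :=
  if i.1 < j.1 then i else if j.1 < i.1 then j else (i.1, none)

/-- Information on the lists obtained by putting `p` in front. -/
def LengthInfo.cons (p : ℕ × ℕ) (i : LengthInfo) : LengthInfo :=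
  (i.1 + 1, i.2.map (p :: ·))

/-- Move every tile one position up. -/
def shiftUp (L : List (ℕ × ℕ)) : List (ℕ × ℕ) := L.map fun p => (p.1 + 1, p.2)

/-- Entry `c` of `t` holds information on the lists `L` of tiles from `S` with
`tileSum L + c + 1 = 2 ^ k` whose tiles at position `0` are in `A`. -/
def TableHolds (S A : List ℕ) (k : ℕ) (t : List LengthInfo) : Prop :=
  ∀ c i L, t[c]? = some i → OrderedTiles S A L → tileSum L + c + 1 = 2 ^ k → i.Holds L

/-- Pass from the exponent `k` to `k + 1`, with no tiles at position `0`. Even indices are then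
impossible, so any bound is sound there; `n` trivial entries are appended. -/
def shiftTable (n : ℕ) : List LengthInfo → List LengthInfo
  | [] => List.replicate n (0, none)
  | i :: t => (100, none) :: (i.1, i.2.map shiftUp) :: shiftTable n t

/-- Allow one more tile `(0, a)`. -/
def addTile (a : ℕ) (t : List LengthInfo) : List LengthInfo :=
  List.zipWith (fun i j => i.merge (j.cons (0, a))) t (t.drop a)

/-- The table at the exponent `k`, truncated to `N` entries. -/
def infoTable (S : List ℕ) (N : ℕ) : ℕ → List LengthInfo
  | 0 => (0, some []) :: List.replicate (N - 1) (100, none)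
  | k + 1 => (S.foldr addTile (shiftTable S.sum (infoTable S N k))).take N

theorem TileOrder.trans {p q s : ℕ × ℕ} (h : TileOrder p q) (h' : TileOrder q s) :
    TileOrder p s := by
  unfold TileOrder at *
  omega

theorem LengthInfo.Holds.merge_left {i : LengthInfo} {L : List (ℕ × ℕ)} (h : i.Holds L)
    (j : LengthInfo) : (i.merge j).Holds L := by
  unfold LengthInfo.merge
  split_ifs with h₁ h₂
  · exact h
  · exact ⟨h₂.le.trans h.1, fun T _ e => absurd h.1 (by omega)⟩
  · exact ⟨h.1, by simp⟩

theorem LengthInfo.Holds.merge_right {j : LengthInfo} {L : List (ℕ × ℕ)} (h : j.Holds L)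
    (i : LengthInfo) : (i.merge j).Holds L := by
  unfold LengthInfo.merge
  split_ifs with h₁ h₂
  · exact ⟨h₁.le.trans h.1, fun T _ e => absurd h.1 (by omega)⟩
  · exact h
  · exact ⟨(not_lt.mp h₂).trans h.1, by simp⟩

theorem LengthInfo.Holds.cons {i : LengthInfo} {L : List (ℕ × ℕ)} (h : i.Holds L)
    (p : ℕ × ℕ) : (i.cons p).Holds (p :: L) := by
  refine ⟨by simpa [LengthInfo.cons] using h.1, fun T hT e => ?_⟩
  obtain ⟨U, hU, rfl⟩ : ∃ U, i.2 = some U ∧ p :: U = T := by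
    simpa [LengthInfo.cons] using hT
  rw [h.2 U hU (by simpa [LengthInfo.cons] using e)]

theorem LengthInfo.Holds.shiftUp {i : LengthInfo} {L : List (ℕ × ℕ)} (h : i.Holds L) :
    LengthInfo.Holds (i.1, i.2.map shiftUp) (shiftUp L) := by
  refine ⟨by simpa [_root_.shiftUp] using h.1, fun T hT e => ?_⟩
  obtain ⟨U, hU, rfl⟩ : ∃ U, i.2 = some U ∧ _root_.shiftUp U = T := by simpa using hT
  rw [h.2 U hU (by simpa [_root_.shiftUp] using e)]

theorem tileSum_shiftUp (L : List (ℕ × ℕ)) : tileSum (shiftUp L) = 2 * tileSum L := by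
  induction L with
  | nil => rfl
  | cons p L ih =>
    simp only [tileSum, shiftUp, List.map_cons, List.sum_cons] at ih ⊢
    rw [ih]
    ring

theorem OrderedTiles.exists_shiftUp {S : List ℕ} {L : List (ℕ × ℕ)} (h : OrderedTiles S [] L) :
    ∃ M, OrderedTiles S S M ∧ shiftUp M = L := by
  have hpos : ∀ p ∈ L, p.1 ≠ 0 := fun p hp h0 => by simpa using h.mem_of_zero p hp h0
  refine ⟨L.map fun p => (p.1 - 1, p.2), ⟨?_, ?_, ?_⟩, ?_⟩
  · simp only [List.forall_mem_map]
    exact h.mem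
  · rw [List.pairwise_map]
    refine h.pairwise.imp_of_mem fun {p q} hp hq hpq => ?_
    have := hpos p hp
    have := hpos q hq
    simp only [TileOrder] at *
    omega
  · simp only [List.forall_mem_map]
    exact fun p hp _ => h.mem p hp
  · rw [shiftUp, List.map_map]
    refine (List.map_congr_left fun p hp => ?_).trans (List.map_id L)
    have := hpos p hp
    ext <;> simp
    omega

theorem OrderedTiles.eq_cons_or {S A : List ℕ} {a : ℕ} {L : List (ℕ × ℕ)}
    (hA : (a :: A).Pairwise (· > ·)) (h : OrderedTiles S (a :: A) L) :
    OrderedTiles S A L ∨ ∃ M, L = (0, a) :: M ∧ OrderedTiles S A M := by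
  have hlt := (List.pairwise_cons.mp hA).1
  obtain ⟨hS, hL, h0⟩ := h
  cases L with
  | nil => exact .inl ⟨hS, hL, by simp⟩
  | cons p M =>
    obtain ⟨hp, hM⟩ := List.pairwise_cons.mp hL
    have htail : ∀ q ∈ M, q.1 = 0 → q.2 ∈ A := by
      intro q hq hq0
      have hpq := hp q hq
      have hp0 : p.1 = 0 := by have := hpq.1; omega
      have hlt' := hpq.2 (by omega)
      have hqA := h0 q (by simp [hq]) hq0
      have hpA := h0 p (by simp) hp0
      rcases List.mem_cons.mp hqA with e | hqA
      · rcases List.mem_cons.mp hpA with e' | hpA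
        · omega
        · have := hlt _ hpA
          omega
      · exact hqA
    by_cases hpa : p = (0, a)
    · exact .inr ⟨M, by rw [hpa], fun q hq => hS q (by simp [hq]), hM, htail⟩
    · refine .inl ⟨hS, hL, fun q hq hq0 => ?_⟩
      rcases List.mem_cons.mp hq with rfl | hq
      · exact (List.mem_cons.mp (h0 q (by simp) hq0)).resolve_left
          fun e => hpa (Prod.ext hq0 e)
      · exact htail q hq hq0

theorem getElem?_shiftTable {n c : ℕ} {t : List LengthInfo} {i : LengthInfo}
    (h : (shiftTable n t)[c]? = some i) :
    i = (0, none) ∨ c % 2 = 0 ∨ ∃ j, t[c / 2]? = some j ∧ i = (j.1, j.2.map shiftUp) := by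
  induction t generalizing c with
  | nil => exact .inl (List.eq_of_mem_replicate (List.mem_of_getElem? h))
  | cons j t ih =>
    match c with
    | 0 => simp
    | 1 =>
      refine .inr (.inr ⟨j, rfl, ?_⟩)
      simpa [shiftTable] using h.symm
    | c + 2 =>
      have hdiv : (c + 2) / 2 = c / 2 + 1 := by omega
      rw [Nat.add_mod_right, hdiv, List.getElem?_cons_succ]
      exact ih (by simpa [shiftTable] using h)

theorem TableHolds.shiftTable {S : List ℕ} {k : ℕ} {t : List LengthInfo}
    (ht : TableHolds S S k t) (n : ℕ) : TableHolds S [] (k + 1) (shiftTable n t) := by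
  intro c i L hi hL hsum
  obtain ⟨M, hM, rfl⟩ := hL.exists_shiftUp
  rw [tileSum_shiftUp, pow_succ] at hsum
  rcases getElem?_shiftTable hi with rfl | hc | ⟨j, hj, rfl⟩
  · simp [LengthInfo.Holds]
  · omega
  · exact (ht (c / 2) j M hj hM (by omega)).shiftUp

theorem TableHolds.addTile {S A : List ℕ} {a k : ℕ} {t : List LengthInfo}
    (ht : TableHolds S A k t) (hA : (a :: A).Pairwise (· > ·)) :
    TableHolds S (a :: A) k (addTile a t) := by
  intro c i L hi hL hsum
  obtain ⟨x, y, hx, hy, rfl⟩ := List.getElem?_zipWith_eq_some.mp hi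
  rcases hL.eq_cons_or hA with h | ⟨M, rfl, hM⟩
  · exact (ht c x L hx h hsum).merge_left _
  · rw [List.getElem?_drop] at hy
    refine ((ht (a + c) y M hy hM ?_).cons (0, a)).merge_right _
    rw [← hsum]
    simp [tileSum]
    ring

theorem TableHolds.foldr_addTile {S A : List ℕ} {k : ℕ} {t : List LengthInfo}
    (ht : TableHolds S [] k t) (hA : A.Pairwise (· > ·)) :
    TableHolds S A k (A.foldr _root_.addTile t) := by
  induction A with
  | nil => exact ht
  | cons a A ih => exact (ih (List.pairwise_cons.mp hA).2).addTile hA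

theorem TableHolds.take {S A : List ℕ} {k : ℕ} {t : List LengthInfo}
    (ht : TableHolds S A k t) (N : ℕ) : TableHolds S A k (t.take N) := by
  intro c i L hi
  rw [List.getElem?_take] at hi
  split_ifs at hi
  exact ht c i L hi

theorem tableHolds_infoTable {S : List ℕ} (hS : S.Pairwise (· > ·)) (N k : ℕ) :
    TableHolds S S k (infoTable S N k) := by
  induction k with
  | zero =>
    intro c i L hi hL hsum
    obtain ⟨-, rfl⟩ : tileSum L = 0 ∧ c = 0 := by simpa using hsum
    obtain rfl : (0, some []) = i := by simpa [infoTable] using hi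
    refine ⟨Nat.zero_le _, fun T hT e => ?_⟩
    rw [List.length_eq_zero_iff.mp e]
    simpa using hT
  | succ k ih => exact ((ih.shiftTable _).foldr_addTile hS).take N

theorem infoTable_getElem?_seven :
    (infoTable [19, 9, 5, 3, 1] 30 27)[7]? =
      some (9, some [(3, 19), (5, 19), (8, 5), (11, 19), (13, 19), (16, 5), (19, 19), (21, 19),
        (24, 5)]) := by
  decide +kernel

theorem IsTiling.holds {L : List (ℕ × ℕ)} (h : IsTiling {1, 3, 5, 9, 19} (2 ^ 27 - 8) L) :
    LengthInfo.Holds (9, some [(3, 19), (5, 19), (8, 5), (11, 19), (13, 19), (16, 5), (19, 19),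
      (21, 19), (24, 5)]) L := by
  obtain ⟨hmem, hchain, hsum⟩ := h
  have hmem' : ∀ p ∈ L, p.2 ∈ [19, 9, 5, 3, 1] := fun p hp => by
    have := hmem p hp
    simp only [Finset.mem_insert, Finset.mem_singleton] at this
    simp only [List.mem_cons, List.not_mem_nil]
    tauto
  have : IsTrans (ℕ × ℕ) TileOrder := ⟨fun _ _ _ => TileOrder.trans⟩
  have hpair : L.Pairwise TileOrder := List.isChain_iff_pairwise.mp hchain
  refine tableHolds_infoTable (by decide) 30 27 7 _ L infoTable_getElem?_seven
    ⟨hmem', hpair, fun p hp _ => hmem' p hp⟩ ?_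
  rw [tileSum, hsum]
  norm_num

theorem isTiling_nine : IsTiling {1, 3, 5, 9, 19} (2 ^ 27 - 8)
    [(3, 19), (5, 19), (8, 5), (11, 19), (13, 19), (16, 5), (19, 19), (21, 19), (24, 5)] := by
  refine ⟨by decide, ?_, by norm_num⟩
  simp [List.Chain']

theorem stilde_eq_nine : stilde {1, 3, 5, 9, 19} (2 ^ 27 - 8) = 9 := by
  refine le_antisymm (sInf_le ⟨_, isTiling_nine, rfl⟩) (le_sInf ?_)
  rintro _ ⟨L, hL, rfl⟩
  exact_mod_cast hL.holds.1

theorem stmt13 :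
    (2 ^ 27 - 8 : ℕ) = 5 * 2 ^ 24 + 19 * 2 ^ 21 + 19 * 2 ^ 19 + 5 * 2 ^ 16 +
      19 * 2 ^ 13 + 19 * 2 ^ 11 + 5 * 2 ^ 8 + 19 * 2 ^ 5 + 19 * 2 ^ 3 ∧
    stilde {1, 3, 5, 9, 19} (2 ^ 27 - 8) = 9 ∧
    Ktilde {1, 3, 5, 9, 19} (2 ^ 27 - 8) =
      {[(3, 19), (5, 19), (8, 5), (11, 19), (13, 19), (16, 5), (19, 19), (21, 19),
        (24, 5)]} := by
  refine ⟨by norm_num, stilde_eq_nine, Set.ext fun L => ⟨fun ⟨hL, hlen⟩ => ?_, ?_⟩⟩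
  · rw [stilde_eq_nine] at hlen
    exact hL.holds.2 _ rfl (by exact_mod_cast hlen)
  · rintro rfl
    exact ⟨isTiling_nine, stilde_eq_nine.symm⟩
end
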